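/- Define integer sequences a, b : ℕ → ℤ both satisfying the recurrence u(n) − 4u(n+1) − u(n+2) − 24u(n+3) + 65u(n+4) − 24u(n+5) − u(n+6) − 4u(n+7) + u(n+8) = 0 for all n ≥ 0, with initial data a(0)=0, a(1)=1, a(2)=4, a(3)=9, a(4)=72, a(5)=320, a(6)=1332, a(7)=6889 and b(0)=1, b(1)=1, b(2)=20, b(3)=83, b(4)=289, b(5)=1693, b(6)=7775, b(7)=34820. Then for every integer n ≥ 4, τ(GP(2n,3)) = 12n·a(n)², and for every integer n ≥ 3, τ(GP(2n+1,3)) = (2n+1)·b(n)². -/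

import Mathlib

open Polynomial

/-- The defining relation for the generalized Petersen graph `GP(n,k)`:
`u_i ~ u_{i+1}`, `u_i ~ v_i`, `v_i ~ v_{i+k}` (indices mod `n`);
`Sum.inl i` is the outer vertex `u_i`, `Sum.inr i` the inner vertex `v_i`. -/
def gpRel (n k : ℕ) : (ZMod n ⊕ ZMod n) → (ZMod n ⊕ ZMod n) → Prop
  | Sum.inl i, Sum.inl j => j = i + 1
  | Sum.inl i, Sum.inr j => j = i
  | Sum.inr _, Sum.inl _ => False
  | Sum.inr i, Sum.inr j => j = i + (k : ZMod n)

instance (n k : ℕ) : DecidableRel (gpRel n k) := fun a b =>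
  match a, b with
  | Sum.inl i, Sum.inl j => inferInstanceAs (Decidable (j = i + 1))
  | Sum.inl i, Sum.inr j => inferInstanceAs (Decidable (j = i))
  | Sum.inr _, Sum.inl _ => inferInstanceAs (Decidable False)
  | Sum.inr i, Sum.inr j => inferInstanceAs (Decidable (j = i + (k : ZMod n)))

/-- The generalized Petersen graph `GP(n,k)`. -/
def genPetersen (n k : ℕ) : SimpleGraph (ZMod n ⊕ ZMod n) :=
  SimpleGraph.fromRel (gpRel n k)

instance (n k : ℕ) : DecidableRel (genPetersen n k).Adj := fun a b =>
  inferInstanceAs (Decidable (a ≠ b ∧ (gpRel n k a b ∨ gpRel n k b a)))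

/-- The number of spanning trees of a graph `G`: the number of subgraphs that
contain all vertices and are trees. -/
noncomputable def numSpanningTrees {V : Type*} (G : SimpleGraph V) : ℕ :=
  Nat.card {H : G.Subgraph // H.IsSpanning ∧ H.coe.IsTree}

/-!
By the matrix-tree theorem, `4N² τ(GP(N,k))` is the determinant of the Laplacian plus the all-ones
matrix, whose four blocks are circulant, so the discrete Fourier transform diagonalizes them:
`N τ(GP(N,k)) = ∏_{j ≠ 0} ((3 - λ_j)(3 - λ_{kj}) - 1)` with `λ_j = 2 cos (2πj/N)`. For `k = 3` we
have `λ_{3j} = λ_j³ - 3λ_j`, and the factor splits as `(2 - λ_j)(x - λ_j)(y - λ_j)(z - λ_j)` for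
the roots `x, y, z` of a fixed cubic. Each product `∏_{j ≠ 0} (w - λ_j)` is, up to the factor
`w + 2` when `N` is even, the square of a Chebyshev expression in `w`. The product of three
sequences satisfying `e(n+2) = w e(n+1) - e(n)`, for `w = x, y, z`, satisfies an
eighth-order recurrence whose coefficients are symmetric functions of `x, y, z`.
-/

section MatrixTree

variable {V : Type*}

lemma numSpanningTrees_eq_card (G : SimpleGraph V) :
    numSpanningTrees G = Nat.card {T : SimpleGraph V // T ≤ G ∧ T.IsTree} := by
  refine Nat.card_congr ⟨fun H => ⟨H.1.spanningCoe, H.1.spanningCoe_le,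
      (H.1.spanningCoeEquivCoeOfSpanning H.2.1).isTree_iff.2 H.2.2⟩,
    fun T => ⟨SimpleGraph.toSubgraph T.1 T.2.1, SimpleGraph.toSubgraph.isSpanning _ _,
      ((SimpleGraph.toSubgraph T.1 T.2.1).spanningCoeEquivCoeOfSpanning
        (SimpleGraph.toSubgraph.isSpanning _ _)).isTree_iff.1 T.2.2⟩, ?_, fun _ => rfl⟩
  rintro ⟨H, hspan, -⟩
  exact Subtype.ext (SimpleGraph.Subgraph.ext (Set.eq_univ_of_forall hspan).symm rfl)

/-- The orbit of every vertex under `f` reaches `r`. A map with this property that fixes `r` is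
the parent map of a tree rooted at `r`. -/
def LeadsTo (f : V → V) (r : V) : Prop :=
  ∀ v, ∃ k, f^[k] v = r

/-- The graph whose edges join each vertex to its image under the parent map `f`. -/
def parentGraph (f : V → V) : SimpleGraph V :=
  SimpleGraph.fromRel fun v w => f v = w

lemma eq_of_isPeriodicPt_of_iterate_eq {f : V → V} {r v : V} {n k : ℕ} (hr : f r = r)
    (hn : 0 < n) (hv : f.IsPeriodicPt n v) (hk : f^[k] v = r) : v = r :=
  calc v = f^[n * k] v := (hv.mul_const k).symm
    _ = f^[n * k - k] (f^[k] v) := by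
      rw [← Function.iterate_add_apply, Nat.sub_add_cancel (Nat.le_mul_of_pos_left k hn)]
    _ = r := by rw [hk, Function.iterate_fixed hr]

lemma parentGraph_le {f : V → V} {r : V} {G : SimpleGraph V} (hr : f r = r)
    (hf : ∀ v, v ≠ r → G.Adj v (f v)) : parentGraph f ≤ G := by
  have adj_map : ∀ v, v ≠ f v → G.Adj v (f v) := fun v hv =>
    hf v fun hvr => hv (by rw [hvr, hr])
  rintro v w ⟨hne, rfl | rfl⟩
  · exact adj_map v hne
  · exact (adj_map w hne.symm).symm

lemma parentGraph_connected {f : V → V} {r : V} (hf : LeadsTo f r) :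
    (parentGraph f).Connected := by
  have reachable_map (v : V) : (parentGraph f).Reachable v (f v) := by
    by_cases hv : v = f v
    · rw [← hv]
    · exact SimpleGraph.Adj.reachable ⟨hv, Or.inl rfl⟩
  have reachable_iterate (k : ℕ) (v : V) : (parentGraph f).Reachable v (f^[k] v) := by
    induction k with
    | zero => rfl
    | succ k ih =>
      rw [Function.iterate_succ_apply']
      exact ih.trans (reachable_map _)
  have reachable_root (v : V) : (parentGraph f).Reachable v r := by
    obtain ⟨k, rfl⟩ := hf v
    exact reachable_iterate k v
  exact { preconnected := fun v w => (reachable_root v).trans (reachable_root w).symm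
          nonempty := ⟨r⟩ }

lemma parentGraph_isTree [Finite V] {f : V → V} {r : V} (hr : f r = r) (hf : LeadsTo f r) :
    (parentGraph f).IsTree := by
  have hconn := parentGraph_connected hf
  refine SimpleGraph.isTree_iff_connected_and_card.2
    ⟨hconn, le_antisymm ?_ hconn.card_vert_le_card_edgeSet_add_one⟩
  have edgeSet_subset :
      (parentGraph f).edgeSet ⊆ (fun v => s(v, f v)) '' {r}ᶜ := by
    intro e
    induction e using Sym2.ind with
    | _ v w =>
      rintro ⟨hne, hfv | hfw⟩ <;> dsimp only at *
      · exact ⟨v, fun hv => hne (by rw [← hfv, hv, hr]), congrArg _ hfv⟩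
      · exact ⟨w, fun hw => hne (by rw [← hfw, hw, hr]), (congrArg _ hfw).trans Sym2.eq_swap⟩
  calc (parentGraph f).edgeSet.ncard + 1
      ≤ ({r}ᶜ : Set V).ncard + 1 := by
        gcongr
        exact (Set.ncard_le_ncard edgeSet_subset (Set.toFinite _)).trans
          (Set.ncard_image_le (Set.toFinite _))
    _ = Nat.card V := by
        rw [add_comm, ← Set.ncard_singleton r, Set.ncard_add_ncard_compl]

lemma eq_of_parentGraph_eq {f g : V → V} {r : V} (hfr : f r = r) (hgr : g r = r)
    (hf : LeadsTo f r) (h : parentGraph f = parentGraph g) : f = g := by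
  have eq_of_iterate (k : ℕ) : ∀ v, f^[k] v = r → f v = g v := by
    induction k with
    | zero =>
      rintro v rfl
      exact hfr.trans hgr.symm
    | succ k ih =>
      intro v hk
      by_cases hvr : v = r
      · rw [hvr, hfr, hgr]
      have hne : v ≠ f v := fun hv =>
        hvr (eq_of_isPeriodicPt_of_iterate_eq hfr one_pos hv.symm hk)
      have hadj : (parentGraph g).Adj v (f v) := h ▸ ⟨hne, Or.inl rfl⟩
      obtain ⟨-, hgv | hgfv⟩ := hadj
      · exact hgv.symm
      · rw [← ih (f v) hk] at hgfv
        exact absurd (eq_of_isPeriodicPt_of_iterate_eq hfr two_pos hgfv hk) hvr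
  funext v
  obtain ⟨k, hk⟩ := hf v
  exact eq_of_iterate k v hk

lemma leadsTo_of_decreasing {f : V → V} {r : V} (d : V → ℕ)
    (hd : ∀ v, v ≠ r → d (f v) < d v) : LeadsTo f r := by
  intro v
  induction hn : d v using Nat.strong_induction_on generalizing v with
  | _ n ih =>
    by_cases hv : v = r
    · exact ⟨0, hv⟩
    · obtain ⟨k, hk⟩ := ih _ (hn ▸ hd v hv) (f v) rfl
      exact ⟨k + 1, hk⟩

lemma exists_parentGraph_eq {T : SimpleGraph V} (hT : T.IsTree) (r : V) :
    ∃ f : V → V, f r = r ∧ LeadsTo f r ∧ (∀ v, v ≠ r → T.Adj v (f v)) ∧ parentGraph f = T := by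
  classical
  have closer_neighbor (v : V) (hv : v ≠ r) : ∃ u, T.Adj v u ∧ T.dist u r < T.dist v r := by
    obtain ⟨p, hp⟩ := hT.connected.exists_walk_length_eq_dist v r
    cases p with
    | nil => exact absurd rfl hv
    | cons h q =>
      refine ⟨_, h, (SimpleGraph.dist_le q).trans_lt ?_⟩
      rw [← hp, SimpleGraph.Walk.length_cons]
      exact Nat.lt_succ_self _
  choose! g hadj hlt using closer_neighbor
  let f := Function.update g r r
  have hfr : f r = r := Function.update_self r r g
  have hf (v : V) (hv : v ≠ r) : f v = g v := Function.update_of_ne hv r g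
  have hlead : LeadsTo f r :=
    leadsTo_of_decreasing (T.dist · r) fun v hv => (hf v hv).symm ▸ hlt v hv
  have hfadj (v : V) (hv : v ≠ r) : T.Adj v (f v) := (hf v hv).symm ▸ hadj v hv
  have hle : parentGraph f ≤ T := parentGraph_le hfr hfadj
  exact ⟨f, hfr, hlead, hfadj, le_antisymm hle
    ((SimpleGraph.isTree_iff_minimal_connected.1 hT).2 (parentGraph_connected hlead) hle)⟩

lemma numSpanningTrees_eq_card_parentMaps [Finite V] (G : SimpleGraph V) (r : V) :
    numSpanningTrees G =
      Nat.card {f : V → V // f r = r ∧ (∀ v, v ≠ r → G.Adj v (f v)) ∧ LeadsTo f r} := by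
  let toTree : {f : V → V // f r = r ∧ (∀ v, v ≠ r → G.Adj v (f v)) ∧ LeadsTo f r} →
      {T : SimpleGraph V // T ≤ G ∧ T.IsTree} :=
    fun f => ⟨parentGraph f.1, parentGraph_le f.2.1 f.2.2.1, parentGraph_isTree f.2.1 f.2.2.2⟩
  have hinj : toTree.Injective := fun f g h => Subtype.ext <|
    eq_of_parentGraph_eq f.2.1 g.2.1 f.2.2.2 (congrArg Subtype.val h)
  have hsurj : toTree.Surjective := by
    rintro ⟨T, hTG, hT⟩
    obtain ⟨f, hr, hlead, hadj, rfl⟩ := exists_parentGraph_eq hT r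
    exact ⟨⟨f, hr, fun v hv => hTG (hadj v hv), hlead⟩, rfl⟩
  rw [numSpanningTrees_eq_card, Nat.card_eq_of_bijective toTree ⟨hinj, hsurj⟩]

variable [DecidableEq V] (R : Type*) [CommRing R]

/-- The Laplacian of the parent map `f` with out-edges `v → f v`, its row at the root `r` being
replaced by the basis vector of `r`. -/
def parentMatrix (f : V → V) (r : V) : Matrix V V R :=
  Matrix.of fun v => if v = r then Pi.single r 1 else Pi.single v 1 - Pi.single (f v) 1

lemma parentMatrix_row_root (f : V → V) (r : V) : parentMatrix R f r r = Pi.single r 1 :=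
  if_pos rfl

lemma parentMatrix_row_of_ne (f : V → V) {r v : V} (hv : v ≠ r) :
    parentMatrix R f r v = Pi.single v 1 - Pi.single (f v) 1 :=
  if_neg hv

variable [Fintype V]

lemma det_parentMatrix_of_leadsTo {f : V → V} {r : V} (hf : LeadsTo f r) :
    (parentMatrix R f r).det = 1 := by
  classical
  let depth : V → ℕ := fun v => Nat.find (hf v)
  have depth_map_lt (v : V) (hv : v ≠ r) : depth (f v) < depth v := by
    have hspec := Nat.find_spec (hf v)
    obtain ⟨k, hk⟩ := Nat.exists_eq_succ_of_ne_zero fun h0 : depth v = 0 =>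
      hv (by rwa [show Nat.find (hf v) = 0 from h0] at hspec)
    rw [show Nat.find (hf v) = k + 1 from hk] at hspec
    exact hk ▸ Nat.lt_succ_of_le (Nat.find_min' (hf (f v)) hspec)
  have apply_of_depth_le (v w : V) (h : depth v ≤ depth w) :
      parentMatrix R f r v w = (1 : Matrix V V R) v w := by
    rw [Matrix.one_eq_pi_single]
    by_cases hv : v = r
    · rw [hv, parentMatrix_row_root]
    · have hw : w ≠ f v := fun hw => (depth_map_lt v hv).not_ge (hw ▸ h)
      rw [parentMatrix_row_of_ne R f hv, Pi.sub_apply, Pi.single_eq_of_ne hw, sub_zero]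
  have htri : (parentMatrix R f r).BlockTriangular (OrderDual.toDual ∘ depth) := by
    intro v w hvw
    have hlt : depth v < depth w := hvw
    rw [apply_of_depth_le v w hlt.le, Matrix.one_apply_ne (ne_of_apply_ne depth hlt.ne)]
  rw [htri.det]
  refine Finset.prod_eq_one fun n _ => ?_
  suffices h : (parentMatrix R f r).toSquareBlock (OrderDual.toDual ∘ depth) n = 1 by
    rw [h, Matrix.det_one]
  ext ⟨v, hv⟩ ⟨w, hw⟩
  have hvw : depth v = depth w := OrderDual.toDual.injective (hv.trans hw.symm)
  exact (apply_of_depth_le v w hvw.le).trans (by simp [Matrix.one_apply])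

lemma det_parentMatrix_of_not_leadsTo {f : V → V} {r : V} (hf : ¬ LeadsTo f r) :
    (parentMatrix R f r).det = 0 := by
  classical
  let x : V → R := fun v => if ∃ k, f^[k] v = r then 0 else 1
  have hxr : x r = 0 := if_pos ⟨0, rfl⟩
  have hxf (v : V) (hv : v ≠ r) : x (f v) = x v := by
    refine if_congr ⟨fun ⟨k, hk⟩ => ⟨k + 1, hk⟩, ?_⟩ rfl rfl
    rintro ⟨_ | k, hk⟩
    · exact absurd hk hv
    · exact ⟨k, hk⟩
  have hker : (parentMatrix R f r).mulVec x = 0 := by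
    ext v
    by_cases hv : v = r
    · rw [hv, Matrix.mulVec, parentMatrix_row_root, single_one_dotProduct, hxr, Pi.zero_apply]
    · rw [Matrix.mulVec, parentMatrix_row_of_ne R f hv, sub_dotProduct, single_one_dotProduct,
        single_one_dotProduct, hxf v hv, sub_self, Pi.zero_apply]
  obtain ⟨v, hv⟩ := not_forall.1 hf
  refine Matrix.det_eq_zero_of_mulVec_eq_zero_of_mem_nonZeroDivisors (i := v) hker ?_
  rw [show x v = 1 from if_neg hv]
  exact one_mem _

variable (G : SimpleGraph V) [DecidableRel G.Adj]

lemma lapMatrix_row_eq_sum (v : V) :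
    G.lapMatrix R v = ∑ u ∈ G.neighborFinset v, (Pi.single v 1 - Pi.single u 1) := by
  ext w
  rw [Finset.sum_apply]
  simp [SimpleGraph.lapMatrix, SimpleGraph.degMatrix, SimpleGraph.adjMatrix_apply,
    Matrix.diagonal_apply, Pi.single_apply, eq_comm]

lemma adjugate_lapMatrix_eq_sum (r : V) :
    (G.lapMatrix R).adjugate r r =
      ∑ f ∈ Fintype.piFinset fun v => if v = r then {r} else G.neighborFinset v,
        (parentMatrix R f r).det := by
  have updateRow_eq_sum : (G.lapMatrix R).updateRow r (Pi.single r 1) = fun v =>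
      ∑ u ∈ if v = r then {r} else G.neighborFinset v,
        if v = r then Pi.single r 1 else Pi.single v 1 - Pi.single u 1 := by
    ext1 v
    by_cases hv : v = r
    · simp [hv]
    · simp [hv, lapMatrix_row_eq_sum]
  rw [Matrix.adjugate_apply, updateRow_eq_sum]
  exact Matrix.detRowAlternating.toMultilinearMap.map_sum_finset
    (fun v u => if v = r then Pi.single r (1 : R) else Pi.single v 1 - Pi.single u 1) _

theorem numSpanningTrees_eq_adjugate_lapMatrix (r : V) :
    (numSpanningTrees G : R) = (G.lapMatrix R).adjugate r r := by
  classical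
  have det_eq_ite (f : V → V) :
      (parentMatrix R f r).det = if LeadsTo f r then 1 else 0 := by
    split_ifs with hf
    · exact det_parentMatrix_of_leadsTo R hf
    · exact det_parentMatrix_of_not_leadsTo R hf
  have mem_parentMaps (f : V → V) :
      (f r = r ∧ (∀ v, v ≠ r → G.Adj v (f v)) ∧ LeadsTo f r) ↔
        f ∈ (Fintype.piFinset fun v => if v = r then {r} else G.neighborFinset v).filter
          (LeadsTo · r) := by
    rw [Finset.mem_filter, Fintype.mem_piFinset, ← and_assoc]
    refine and_congr_left' ⟨fun h v => ?_, fun h => ⟨?_, fun v hv => ?_⟩⟩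
    · split_ifs with hv
      · simp [hv, h.1]
      · simpa using h.2 v hv
    · simpa using h r
    · simpa [hv] using h v
  rw [adjugate_lapMatrix_eq_sum, Finset.sum_congr rfl fun f _ => det_eq_ite f,
    Finset.sum_boole, numSpanningTrees_eq_card_parentMaps G r,
    Nat.subtype_card _ fun f => (mem_parentMaps f).symm]

end MatrixTree

section RankOneUpdate

open scoped Matrix

variable {V R : Type*} [Fintype V] [DecidableEq V] [CommRing R]

lemma det_add_ones_eq_card_mul_det_updateRow {M : Matrix V V R} (hcol : 1 ᵥ* M = 0) (r : V) :
    (M + Matrix.of 1).det = Fintype.card V * (M.updateRow r 1).det := by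
  have row_sum : ∑ v, (1 : R) • (M + Matrix.of 1 : Matrix V V R) v =
      (Fintype.card V : R) • (1 : V → R) := by
    ext w
    have hw : ∑ v, M v w = 0 := by simpa [Matrix.vecMul, dotProduct] using congrFun hcol w
    rw [Finset.sum_apply]
    simp [Finset.sum_add_distrib, hw]
  have clear_rows : ((M + Matrix.of 1).updateRow r 1).det = (M.updateRow r 1).det := by
    refine Matrix.det_eq_of_forall_row_eq_smul_add_const (fun v => if v = r then 0 else 1) r
      (if_pos rfl) fun v w => ?_
    by_cases hv : v = r <;> simp [hv]
  calc (M + Matrix.of 1).det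
      = ((M + Matrix.of 1).updateRow r
          (∑ v, (1 : R) • (M + Matrix.of 1 : Matrix V V R) v)).det := by
        rw [Matrix.det_updateRow_sum _ r fun _ => (1 : R), one_smul]
    _ = Fintype.card V * (M.updateRow r 1).det := by
        rw [row_sum, Matrix.det_updateRow_smul, clear_rows]

lemma det_updateRow_one_eq_card_mul_adjugate {M : Matrix V V R} (hrow : M *ᵥ 1 = 0) (r : V) :
    (M.updateRow r 1).det = Fintype.card V * M.adjugate r r := by
  set B := M.updateRow r 1
  have hB : B *ᵥ 1 = (Fintype.card V : R) • Pi.single r 1 := by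
    ext v
    by_cases hv : v = r
    · simp [B, hv, Matrix.mulVec, dotProduct]
    · have := congrFun hrow v
      simp_all [B, Matrix.mulVec]
  have hadj : B.adjugate r r = M.adjugate r r := by
    rw [Matrix.adjugate_apply, Matrix.adjugate_apply, Matrix.updateRow_idem]
  have cramer : B.det • (1 : V → R) = (Fintype.card V : R) • B.adjugate.col r := by
    rw [← Matrix.one_mulVec 1, ← Matrix.smul_mulVec, ← Matrix.adjugate_mul,
      ← Matrix.mulVec_mulVec, hB, Matrix.mulVec_smul, Matrix.mulVec_single_one]
  simpa [hadj] using congrFun cramer r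

theorem det_add_ones {M : Matrix V V R} (hrow : M *ᵥ 1 = 0) (hcol : 1 ᵥ* M = 0) (r : V) :
    (M + Matrix.of 1).det = (Fintype.card V : R) ^ 2 * M.adjugate r r := by
  rw [det_add_ones_eq_card_mul_det_updateRow hcol r,
    det_updateRow_one_eq_card_mul_adjugate hrow, sq, mul_assoc]

theorem det_lapMatrix_add_ones (G : SimpleGraph V) [DecidableRel G.Adj] [Nonempty V] :
    (G.lapMatrix R + Matrix.of 1).det = (Fintype.card V : R) ^ 2 * numSpanningTrees G := by
  have hrow : G.lapMatrix R *ᵥ 1 = 0 := G.lapMatrix_mulVec_const_eq_zero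
  have hcol : 1 ᵥ* G.lapMatrix R = 0 := by
    rw [← Matrix.mulVec_transpose, (G.isSymm_lapMatrix R).eq, hrow]
  let r : V := Classical.arbitrary V
  rw [det_add_ones hrow hcol r, numSpanningTrees_eq_adjugate_lapMatrix R G r]

end RankOneUpdate

section Circulant

open Matrix
open scoped ZMod

lemma det_fromBlocks_diagonal {n R : Type*} [Fintype n] [DecidableEq n] [CommRing R]
    (a b c d : n → R) :
    (fromBlocks (diagonal a) (diagonal b) (diagonal c) (diagonal d)).det =
      ∏ j, (a j * d j - b j * c j) := by
  let e : Fin 2 × n ≃ n ⊕ n :=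
    (finTwoEquiv.prodCongr (Equiv.refl n)).trans (Equiv.boolProdEquivSum n)
  have submatrix_eq :
      (fromBlocks (diagonal a) (diagonal b) (diagonal c) (diagonal d)).submatrix e e =
        blockDiagonal fun j => !![a j, b j; c j, d j] := by
    ext ⟨i, j⟩ ⟨i', j'⟩
    fin_cases i <;> fin_cases i' <;>
      simp [e, finTwoEquiv, Equiv.boolProdEquivSum, blockDiagonal_apply, diagonal_apply]
  rw [← det_submatrix_equiv_self e, submatrix_eq, det_blockDiagonal]
  simp only [det_fin_two_of]

variable (N : ℕ) [NeZero N]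

/-- The (unnormalised) discrete Fourier matrix of `ZMod N`, whose columns are the common
eigenvectors of all circulant matrices. -/
noncomputable def fourierMatrix : Matrix (ZMod N) (ZMod N) ℂ :=
  of fun i j => ZMod.stdAddChar (i * j)

lemma det_fourierMatrix_ne_zero : (fourierMatrix N).det ≠ 0 := by
  have orthogonality : fourierMatrix N * of (fun i j => ZMod.stdAddChar (-(i * j))) =
      (N : ℂ) • (1 : Matrix (ZMod N) (ZMod N) ℂ) := by
    ext i j
    calc ∑ x, (ZMod.stdAddChar (i * x) * ZMod.stdAddChar (-(x * j)) : ℂ)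
        = ∑ x, ZMod.stdAddChar (x * (i - j)) := by
          refine Finset.sum_congr rfl fun x _ => ?_
          rw [← AddChar.map_add_eq_mul]
          ring_nf
      _ = ((N : ℂ) • (1 : Matrix (ZMod N) (ZMod N) ℂ)) i j := by
          rw [AddChar.sum_mulShift _ (ZMod.isPrimitive_stdAddChar N)]
          simp [ZMod.card, one_apply, sub_eq_zero]
  intro h
  have hdet := congrArg det orthogonality
  rw [det_mul, h, zero_mul, det_smul, det_one, mul_one] at hdet
  exact pow_ne_zero _ (NeZero.ne (N : ℂ)) hdet.symm

lemma circulant_mul_fourierMatrix (v : ZMod N → ℂ) :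
    circulant v * fourierMatrix N = fourierMatrix N * diagonal (𝓕 v) := by
  ext i j
  calc ∑ x, v (i - x) * ZMod.stdAddChar (x * j)
      = ∑ x, v x * ZMod.stdAddChar ((i - x) * j) := by
        rw [← (Equiv.subLeft i).sum_comp]
        simp
    _ = ZMod.stdAddChar (i * j) * ∑ x, ZMod.stdAddChar (-(x * j)) * v x := by
        rw [Finset.mul_sum]
        refine Finset.sum_congr rfl fun x _ => ?_
        rw [← mul_assoc, ← AddChar.map_add_eq_mul, mul_comm]
        ring_nf
    _ = (fourierMatrix N * diagonal (𝓕 v)) i j := by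
        rw [mul_diagonal, ZMod.dft_apply]
        rfl

theorem det_fromBlocks_circulant (a b c d : ZMod N → ℂ) :
    (fromBlocks (circulant a) (circulant b) (circulant c) (circulant d)).det =
      ∏ j, (𝓕 a j * 𝓕 d j - 𝓕 b j * 𝓕 c j) := by
  set F := fourierMatrix N with hF
  have conj : fromBlocks (circulant a) (circulant b) (circulant c) (circulant d) *
        fromBlocks F 0 0 F =
      fromBlocks F 0 0 F *
        fromBlocks (diagonal (𝓕 a)) (diagonal (𝓕 b)) (diagonal (𝓕 c)) (diagonal (𝓕 d)) := by
    simp [fromBlocks_multiply, hF, circulant_mul_fourierMatrix]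
  have hdet := congrArg det conj
  rw [det_mul, det_mul, mul_comm, det_fromBlocks_diagonal] at hdet
  refine mul_left_cancel₀ ?_ hdet
  rw [det_fromBlocks_zero₁₂]
  exact mul_ne_zero (det_fourierMatrix_ne_zero N) (det_fourierMatrix_ne_zero N)

end Circulant

section Laplacian

open Matrix
open scoped ZMod

/-- The generating vector of the circulant adjacency matrix of the graph on the cyclic group `A`
that joins `i` to `i + s` and `i - s`. -/
def stepVector {A : Type*} (R : Type*) [AddCommGroup A] [DecidableEq A] [AddMonoidWithOne R]
    (s : A) : A → R :=
  Pi.single s 1 + Pi.single (-s) 1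

lemma stepVector_sub_apply {A R : Type*} [AddCommGroup A] [DecidableEq A] [AddMonoidWithOne R]
    {s : A} (hs : s ≠ -s) (i j : A) :
    stepVector R s (i - j) = if i ≠ j ∧ (j = i + s ∨ i = j + s) then 1 else 0 := by
  have sub_eq : i - j = s ↔ i = j + s := sub_eq_iff_eq_add'
  have sub_eq_neg : i - j = -s ↔ j = i + s := by grind
  rw [stepVector, Pi.add_apply, Pi.single_apply, Pi.single_apply]
  by_cases hj : i - j = s
  · have : i = j + s := sub_eq.1 hj
    grind
  · grind

variable (N k : ℕ)

lemma genPetersen_adj_inl_inl (i j : ZMod N) :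
    (genPetersen N k).Adj (Sum.inl i) (Sum.inl j) ↔ i ≠ j ∧ (j = i + 1 ∨ i = j + 1) := by
  simp [genPetersen, gpRel]

lemma genPetersen_adj_inl_inr (i j : ZMod N) :
    (genPetersen N k).Adj (Sum.inl i) (Sum.inr j) ↔ i = j := by
  simp [genPetersen, gpRel, eq_comm]

lemma genPetersen_adj_inr_inr (i j : ZMod N) :
    (genPetersen N k).Adj (Sum.inr i) (Sum.inr j) ↔ i ≠ j ∧ (j = i + k ∨ i = j + k) := by
  simp [genPetersen, gpRel]

variable {N k}

lemma natCast_ne_neg_natCast (hk : 0 < k) (hkN : 2 * k < N) : (k : ZMod N) ≠ -k := by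
  rw [Ne, ← add_eq_zero_iff_eq_neg, ← Nat.cast_add, ZMod.natCast_eq_zero_iff]
  exact fun hdvd => absurd (Nat.le_of_dvd (by lia) hdvd) (by lia)

lemma adjMatrix_genPetersen (R : Type*) [CommRing R] (hk : 0 < k) (hkN : 2 * k < N) :
    (genPetersen N k).adjMatrix R =
      fromBlocks (circulant (stepVector R 1)) 1 1 (circulant (stepVector R (k : ZMod N))) := by
  have h1 : (1 : ZMod N) ≠ -1 := by
    simpa only [Nat.cast_one] using natCast_ne_neg_natCast one_pos (by lia : 2 * 1 < N)
  ext (i | i) (j | j) <;> rw [SimpleGraph.adjMatrix_apply]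
  · rw [fromBlocks_apply₁₁, circulant_apply, stepVector_sub_apply h1]
    exact if_congr (genPetersen_adj_inl_inl N k i j) rfl rfl
  · rw [fromBlocks_apply₁₂, one_apply]
    exact if_congr (genPetersen_adj_inl_inr N k i j) rfl rfl
  · rw [fromBlocks_apply₂₁, one_apply]
    exact if_congr ((SimpleGraph.adj_comm _ _ _).trans <|
      (genPetersen_adj_inl_inr N k j i).trans eq_comm) rfl rfl
  · rw [fromBlocks_apply₂₂, circulant_apply,
      stepVector_sub_apply (natCast_ne_neg_natCast hk hkN)]
    exact if_congr (genPetersen_adj_inr_inr N k i j) rfl rfl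

variable [NeZero N]

lemma circulant_mulVec_one {A R : Type*} [AddCommGroup A] [Fintype A] [NonAssocSemiring R]
    (v : A → R) : circulant v *ᵥ 1 = fun _ => ∑ x, v x := by
  ext i
  simpa [mulVec, dotProduct] using (Equiv.subLeft i).sum_comp v

lemma sum_stepVector {A R : Type*} [AddCommGroup A] [Fintype A] [DecidableEq A]
    [NonAssocSemiring R] (s : A) : ∑ x, stepVector R s x = 2 := by
  simp [stepVector, Finset.sum_add_distrib, one_add_one_eq_two]

lemma degree_genPetersen (hk : 0 < k) (hkN : 2 * k < N) (v : ZMod N ⊕ ZMod N) :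
    (genPetersen N k).degree v = 3 := by
  have row_sum := (genPetersen N k).adjMatrix_mulVec_const_apply (α := ℤ) (a := 1) (v := v)
  rw [adjMatrix_genPetersen ℤ hk hkN, fromBlocks_mulVec] at row_sum
  zify
  rw [← mul_one ((genPetersen N k).degree v : ℤ), ← row_sum]
  rcases v with i | i <;> simp [Function.const_one, circulant_mulVec_one, sum_stepVector]

lemma lapMatrix_genPetersen_add_ones (R : Type*) [CommRing R] (hk : 0 < k) (hkN : 2 * k < N) :
    (genPetersen N k).lapMatrix R + Matrix.of 1 =
      fromBlocks (circulant (Pi.single 0 3 - stepVector R 1 + 1))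
        (circulant (1 - Pi.single 0 1)) (circulant (1 - Pi.single 0 1))
        (circulant (Pi.single 0 3 - stepVector R (k : ZMod N) + 1)) := by
  have degMatrix_eq : (genPetersen N k).degMatrix R =
      fromBlocks (circulant (Pi.single 0 3)) 0 0 (circulant (Pi.single 0 3)) := by
    simp [SimpleGraph.degMatrix, degree_genPetersen hk hkN, circulant_single]
  have ones_eq : (Matrix.of 1 : Matrix (ZMod N ⊕ ZMod N) (ZMod N ⊕ ZMod N) R) =
      fromBlocks (circulant 1) (circulant 1) (circulant 1) (circulant 1) := by
    ext (i | i) (j | j) <;> rfl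
  rw [SimpleGraph.lapMatrix, degMatrix_eq, adjMatrix_genPetersen R hk hkN, ones_eq,
    ← circulant_single_one R (ZMod N), sub_eq_add_neg, fromBlocks_neg, fromBlocks_add,
    fromBlocks_add]
  simp only [circulant_add, zero_add, sub_eq_add_neg, add_comm (circulant 1),
    circulant_neg]

lemma dft_single (s : ZMod N) (c : ℂ) (j : ZMod N) :
    𝓕 (Pi.single s c) j = ZMod.stdAddChar (-(s * j)) * c := by
  simp [ZMod.dft_apply, Pi.single_apply]

lemma dft_one : 𝓕 (1 : ZMod N → ℂ) = Pi.single 0 (N : ℂ) := by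
  have h : (1 : ZMod N → ℂ) = 𝓕 (Pi.single 0 1) := by
    ext j
    simp [dft_single]
  rw [h, ZMod.dft_dft]
  ext j
  simp [Pi.single_apply]

/-- The eigenvalue `2 cos (2πj/N)` of the cycle on `ZMod N`. -/
noncomputable def cycleEigenvalue (j : ZMod N) : ℂ :=
  ZMod.stdAddChar j + ZMod.stdAddChar (-j)

lemma dft_stepVector (s j : ZMod N) : 𝓕 (stepVector ℂ s) j = cycleEigenvalue (s * j) := by
  rw [stepVector, map_add, Pi.add_apply, dft_single, dft_single, cycleEigenvalue, neg_mul, neg_neg,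
    mul_one, mul_one, add_comm]

lemma cycleEigenvalue_zero : cycleEigenvalue (0 : ZMod N) = 2 := by
  simp [cycleEigenvalue, one_add_one_eq_two]

theorem card_mul_numSpanningTrees_genPetersen (hk : 0 < k) (hkN : 2 * k < N) :
    (N : ℂ) * numSpanningTrees (genPetersen N k) =
      ∏ j ∈ Finset.univ.erase (0 : ZMod N),
        ((3 - cycleEigenvalue j) * (3 - cycleEigenvalue ((k : ZMod N) * j)) - 1) := by
  have hdet := det_lapMatrix_add_ones (R := ℂ) (genPetersen N k)
  have dft_diagonal (s j : ZMod N) : 𝓕 (Pi.single 0 3 - stepVector ℂ s + 1) j =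
      3 - cycleEigenvalue (s * j) + (Pi.single 0 N : ZMod N → ℂ) j := by
    simp [dft_single, dft_stepVector, dft_one]
  have dft_offDiagonal (j : ZMod N) :
      𝓕 (1 - Pi.single 0 1) j = (Pi.single 0 N : ZMod N → ℂ) j - 1 := by
    simp [dft_single, dft_one]
  have prod_ne_zero : ∏ j ∈ Finset.univ.erase (0 : ZMod N),
      ((3 - cycleEigenvalue j + (Pi.single 0 N : ZMod N → ℂ) j) *
          (3 - cycleEigenvalue ((k : ZMod N) * j) + (Pi.single 0 N : ZMod N → ℂ) j) -
        ((Pi.single 0 N : ZMod N → ℂ) j - 1) * ((Pi.single 0 N : ZMod N → ℂ) j - 1)) =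
      ∏ j ∈ Finset.univ.erase (0 : ZMod N),
        ((3 - cycleEigenvalue j) * (3 - cycleEigenvalue ((k : ZMod N) * j)) - 1) :=
    Finset.prod_congr rfl fun j hj => by simp [Pi.single_eq_of_ne (Finset.ne_of_mem_erase hj)]
  simp only [lapMatrix_genPetersen_add_ones ℂ hk hkN, det_fromBlocks_circulant, dft_diagonal,
    dft_offDiagonal, one_mul] at hdet
  rw [← Finset.mul_prod_erase _ _ (Finset.mem_univ 0), prod_ne_zero, mul_zero,
    cycleEigenvalue_zero, Pi.single_eq_same, Fintype.card_sum, ZMod.card] at hdet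
  push_cast at hdet
  refine mul_left_cancel₀ (mul_ne_zero (by norm_num : (4 : ℂ) ≠ 0) (NeZero.ne (N : ℂ))) ?_
  linear_combination -hdet

end Laplacian

section CycleProduct

variable {N : ℕ} [NeZero N]

lemma image_stdAddChar :
    Finset.univ.image (ZMod.stdAddChar (N := N)) = nthRootsFinset N (1 : ℂ) := by
  have hN : 0 < N := NeZero.pos N
  refine Finset.eq_of_subset_of_card_le (Finset.image_subset_iff.2 fun j _ => ?_) ?_
  · rw [mem_nthRootsFinset hN, ← AddChar.map_nsmul_eq_pow, nsmul_eq_mul, ZMod.natCast_self,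
      zero_mul, AddChar.map_zero_eq_one]
  · rw [(Complex.isPrimitiveRoot_exp N hN.ne').card_nthRootsFinset,
      Finset.card_image_of_injective _ ZMod.injective_stdAddChar, Finset.card_univ, ZMod.card]

lemma X_pow_sub_one_eq_prod_stdAddChar :
    (X ^ N - 1 : ℂ[X]) = ∏ j : ZMod N, (X - C (ZMod.stdAddChar j)) := by
  rw [X_pow_sub_one_eq_prod (NeZero.pos N) (Complex.isPrimitiveRoot_exp N (NeZero.ne N)),
    ← image_stdAddChar, Finset.prod_image ZMod.injective_stdAddChar.injOn]

lemma prod_sub_stdAddChar (x : ℂ) :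
    ∏ j ∈ Finset.univ.erase (0 : ZMod N), (x - ZMod.stdAddChar j) =
      ∑ i ∈ Finset.range N, x ^ i := by
  have h : ((X - 1) * ∑ i ∈ Finset.range N, X ^ i : ℂ[X]) =
      (X - 1) * ∏ j ∈ Finset.univ.erase (0 : ZMod N), (X - C (ZMod.stdAddChar j)) := by
    rw [mul_geom_sum, X_pow_sub_one_eq_prod_stdAddChar,
      ← Finset.mul_prod_erase _ _ (Finset.mem_univ (0 : ZMod N)), AddChar.map_zero_eq_one, C_1]
  have hX : (X - 1 : ℂ[X]) ≠ 0 := X_sub_C_ne_zero 1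
  simpa [eval_prod, eval_finsetSum] using congrArg (eval x) (mul_left_cancel₀ hX h).symm

lemma prod_sub_stdAddChar_neg (x : ℂ) :
    ∏ j ∈ Finset.univ.erase (0 : ZMod N), (x - ZMod.stdAddChar (-j)) =
      ∑ i ∈ Finset.range N, x ^ i := by
  rw [← prod_sub_stdAddChar (N := N)]
  exact Finset.prod_equiv (Equiv.neg _) (by simp) fun _ _ => rfl

lemma pow_mul_prod_sub_cycleEigenvalue {r : ℂ} (hr : r ≠ 0) :
    r ^ (N - 1) * ∏ j ∈ Finset.univ.erase (0 : ZMod N), (r + r⁻¹ - cycleEigenvalue j) =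
      (∑ i ∈ Finset.range N, r ^ i) ^ 2 := by
  have factor (j : ZMod N) : r * (r + r⁻¹ - cycleEigenvalue j) =
      (r - ZMod.stdAddChar j) * (r - ZMod.stdAddChar (-j)) := by
    have hj : (ZMod.stdAddChar j * ZMod.stdAddChar (-j) : ℂ) = 1 := by
      rw [← AddChar.map_add_eq_mul, add_neg_cancel, AddChar.map_zero_eq_one]
    rw [cycleEigenvalue]
    linear_combination mul_inv_cancel₀ hr - hj
  have hcard : (Finset.univ.erase (0 : ZMod N)).card = N - 1 := by
    rw [Finset.card_erase_of_mem (Finset.mem_univ _), Finset.card_univ, ZMod.card]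
  rw [← hcard, ← Finset.prod_const, ← Finset.prod_mul_distrib]
  simp only [factor, Finset.prod_mul_distrib, prod_sub_stdAddChar, prod_sub_stdAddChar_neg, sq]

lemma prod_two_sub_cycleEigenvalue :
    ∏ j ∈ Finset.univ.erase (0 : ZMod N), (2 - cycleEigenvalue j) = (N : ℂ) ^ 2 := by
  simpa [one_add_one_eq_two] using pow_mul_prod_sub_cycleEigenvalue (N := N) one_ne_zero

lemma mul_geom_sum_sq_eq_S {K : Type*} [Field K] {r : K} (hr : r ≠ 0) (n : ℕ) :
    r * ∑ i ∈ Finset.range n, (r ^ 2) ^ i =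
      r ^ n * (Chebyshev.S K (n - 1)).eval (r + r⁻¹) := by
  induction n using Nat.twoStepInduction with
  | zero => simp
  | one => simp
  | more n ih₀ ih₁ =>
    have hS := congrArg (eval (r + r⁻¹)) (Chebyshev.S_add_two K ((n : ℤ) - 1))
    have e₁ : ((n + 1 : ℕ) : ℤ) - 1 = (n - 1) + 1 := by push_cast; ring
    have e₂ : ((n + 2 : ℕ) : ℤ) - 1 = (n - 1) + 2 := by push_cast; ring
    rw [e₁] at ih₁
    rw [e₂, hS, eval_sub, eval_mul, eval_X]
    have hsum : ∑ i ∈ Finset.range (n + 2), (r ^ 2) ^ i =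
        (1 + r ^ 2) * ∑ i ∈ Finset.range (n + 1), (r ^ 2) ^ i -
          r ^ 2 * ∑ i ∈ Finset.range n, (r ^ 2) ^ i := by
      rw [geom_sum_succ, geom_sum_succ (n := n)]
      ring
    have hinv : r * r⁻¹ = 1 := mul_inv_cancel₀ hr
    rw [hsum]
    linear_combination (1 + r ^ 2) * ih₁ - r ^ 2 * ih₀ -
      r ^ (n + 1) * (Chebyshev.S K ((n : ℤ) - 1 + 1)).eval (r + r⁻¹) * hinv

lemma geom_sum_two_mul {R : Type*} [CommSemiring R] (r : R) (n : ℕ) :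
    ∑ i ∈ Finset.range (2 * n), r ^ i = (1 + r) * ∑ i ∈ Finset.range n, (r ^ 2) ^ i := by
  induction n with
  | zero => simp
  | succ n ih =>
    rw [mul_add_one, Finset.sum_range_succ, Finset.sum_range_succ, ih, Finset.sum_range_succ]
    ring

lemma exists_add_inv_eq {K : Type*} [Field K] [IsAlgClosed K] (x : K) :
    ∃ r : K, r ≠ 0 ∧ r + r⁻¹ = x := by
  have hdeg : (X ^ 2 + C (-x) * X + C 1 : K[X]).degree ≠ 0 := by
    have : (X ^ 2 + C (-x) * X + C 1 : K[X]).degree = 2 := by compute_degree!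
    rw [this]
    exact two_ne_zero
  obtain ⟨r, hr⟩ := IsAlgClosed.exists_root _ hdeg
  have hr : r ^ 2 - x * r + 1 = 0 := by simpa [IsRoot, sub_eq_add_neg] using hr
  have hr0 : r ≠ 0 := by
    rintro rfl
    simp at hr
  exact ⟨r, hr0, by field_simp; linear_combination hr⟩

theorem prod_sub_cycleEigenvalue_two_mul (n : ℕ) [NeZero (2 * n)] (x : ℂ) :
    ∏ j ∈ Finset.univ.erase (0 : ZMod (2 * n)), (x - cycleEigenvalue j) =
      (x + 2) * (Chebyshev.S ℂ (n - 1)).eval x ^ 2 := by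
  obtain ⟨r, hr, rfl⟩ := exists_add_inv_eq x
  have hprod := pow_mul_prod_sub_cycleEigenvalue (N := 2 * n) hr
  have hS := mul_geom_sum_sq_eq_S hr n
  have hpow : r * r ^ (2 * n - 1) = (r ^ n) ^ 2 := by
    rw [mul_pow_sub_one (NeZero.ne _), ← pow_mul, mul_comm]
  rw [geom_sum_two_mul] at hprod
  refine mul_left_cancel₀ (mul_ne_zero hr (pow_ne_zero 2 (pow_ne_zero n hr))) ?_
  generalize ∏ j ∈ Finset.univ.erase (0 : ZMod (2 * n)), (r + r⁻¹ - cycleEigenvalue j) = P at *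
  calc r * (r ^ n) ^ 2 * P = r ^ 2 * (r ^ (2 * n - 1) * P) := by rw [← hpow]; ring
    _ = (1 + r) ^ 2 * (r * ∑ i ∈ Finset.range n, (r ^ 2) ^ i) ^ 2 := by rw [hprod]; ring
    _ = _ := by
      rw [hS]
      field_simp
      ring

theorem prod_sub_cycleEigenvalue_two_mul_add_one (n : ℕ) (x : ℂ) :
    ∏ j ∈ Finset.univ.erase (0 : ZMod (2 * n + 1)), (x - cycleEigenvalue j) =
      (Chebyshev.S ℂ n + Chebyshev.S ℂ (n - 1)).eval x ^ 2 := by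
  obtain ⟨r, hr, rfl⟩ := exists_add_inv_eq x
  have hprod := pow_mul_prod_sub_cycleEigenvalue (N := 2 * n + 1) hr
  have hS := mul_geom_sum_sq_eq_S hr n
  have hS' := mul_geom_sum_sq_eq_S hr (n + 1)
  have hsum : ∑ i ∈ Finset.range (2 * n + 1), r ^ i =
      r ^ n * (Chebyshev.S ℂ n + Chebyshev.S ℂ (n - 1)).eval (r + r⁻¹) := by
    rw [Nat.cast_succ, add_sub_cancel_right] at hS'
    rw [eval_add, Finset.sum_range_succ, geom_sum_two_mul]
    refine mul_left_cancel₀ hr ?_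
    rw [Finset.sum_range_succ] at hS'
    linear_combination hS' + r * hS
  rw [hsum, add_tsub_cancel_right, mul_pow, ← pow_mul, mul_comm n] at hprod
  exact mul_left_cancel₀ (pow_ne_zero _ hr) hprod

end CycleProduct

section Recurrence

-- Rewriting with these equations expresses every term in the middle ones `e (n + 4)`, `e (n + 5)`.
lemma shifts_eq_of_recurrence {R : Type*} [CommRing R] {w : R} {e : ℤ → R}
    (he : ∀ n, e (n + 2) = w * e (n + 1) - e n) (n : ℤ) :
    (e n = w * e (n + 1) - e (n + 2) ∧ e (n + 1) = w * e (n + 2) - e (n + 3) ∧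
      e (n + 2) = w * e (n + 3) - e (n + 4) ∧ e (n + 3) = w * e (n + 4) - e (n + 5)) ∧
    e (n + 6) = w * e (n + 5) - e (n + 4) ∧ e (n + 7) = w * e (n + 6) - e (n + 5) ∧
      e (n + 8) = w * e (n + 7) - e (n + 6) := by
  have fwd (i : ℤ) : e (n + (i + 2)) = w * e (n + (i + 1)) - e (n + i) := by
    simpa only [add_assoc] using he (n + i)
  have bwd (i : ℤ) : e (n + i) = w * e (n + (i + 1)) - e (n + (i + 2)) := by
    linear_combination fwd i
  exact ⟨⟨by simpa using bwd 0, bwd 1, bwd 2, bwd 3⟩, fwd 4, fwd 5, fwd 6⟩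

lemma mul_mul_recurrence {R : Type*} [CommRing R] {x y z : R} {f g h : ℤ → R}
    (hf : ∀ n, f (n + 2) = x * f (n + 1) - f n) (hg : ∀ n, g (n + 2) = y * g (n + 1) - g n)
    (hh : ∀ n, h (n + 2) = z * h (n + 1) - h n) {P s q : R}
    (hP : P = x * y * z) (hs : s = x ^ 2 + y ^ 2 + z ^ 2)
    (hq : q = x ^ 2 * y ^ 2 + x ^ 2 * z ^ 2 + y ^ 2 * z ^ 2) {u : ℤ → R}
    (hu : ∀ n, u n = f n * g n * h n) (n : ℤ) :
    u n - P * u (n + 1) + (q - 2 * s + 4) * u (n + 2) - P * (s - 5) * u (n + 3) +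
      (s ^ 2 - 2 * q - 4 * s + P ^ 2 + 6) * u (n + 4) - P * (s - 5) * u (n + 5) +
      (q - 2 * s + 4) * u (n + 6) - P * u (n + 7) + u (n + 8) = 0 := by
  obtain ⟨⟨f0, f1, f2, f3⟩, f6, f7, f8⟩ := shifts_eq_of_recurrence hf n
  obtain ⟨⟨g0, g1, g2, g3⟩, g6, g7, g8⟩ := shifts_eq_of_recurrence hg n
  obtain ⟨⟨h0, h1, h2, h3⟩, h6, h7, h8⟩ := shifts_eq_of_recurrence hh n
  simp only [hu, f0, f1, f2, f3, f6, f7, f8, g0, g1, g2, g3, g6, g7, g8, h0, h1, h2, h3, h6, h7,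
    h8, hP, hs, hq]
  ring

/-- The linear recurrence satisfied by the sequences `a` and `b`. -/
def palindromicRecurrence (R : Type*) [CommRing R] : LinearRecurrence R :=
  ⟨8, ![-1, 4, 1, 24, -65, 24, 1, 4]⟩

lemma isSolution_palindromicRecurrence_iff {R : Type*} [CommRing R] {u : ℕ → R} :
    (palindromicRecurrence R).IsSolution u ↔ ∀ n, u n - 4 * u (n + 1) - u (n + 2) -
      24 * u (n + 3) + 65 * u (n + 4) - 24 * u (n + 5) - u (n + 6) - 4 * u (n + 7) +
        u (n + 8) = 0 := by
  have hsum (n : ℕ) :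
      ∑ i : Fin 8, (![-1, 4, 1, 24, -65, 24, 1, 4] : Fin 8 → R) i * u (n + i) =
      -u n + 4 * u (n + 1) + u (n + 2) + 24 * u (n + 3) - 65 * u (n + 4) + 24 * u (n + 5) +
        u (n + 6) + 4 * u (n + 7) := by
    simp [Fin.sum_univ_eight, sub_eq_add_neg]
  refine forall_congr' fun n => (iff_of_eq (congrArg (u (n + 8) = ·) (hsum n))).trans ?_
  constructor <;> intro h <;> linear_combination h

lemma eq_of_isSolution_palindromicRecurrence {R : Type*} [CommRing R] {u v : ℕ → R}
    (hu : (palindromicRecurrence R).IsSolution u) (hv : (palindromicRecurrence R).IsSolution v)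
    (init : ∀ i : Fin 8, u i = v i) : u = v :=
  ((palindromicRecurrence R).eq_iff_eqOn_range_order u v hu hv).2 fun n hn =>
    init ⟨n, Finset.mem_range.1 hn⟩

lemma S_three (R : Type*) [CommRing R] : Chebyshev.S R 3 = X * (X ^ 2 - 1) - X := by
  have h := Chebyshev.S_add_two R 1
  rwa [Chebyshev.S_one, one_add_one_eq_two, Chebyshev.S_two] at h

lemma S_sub_one_add_two (R : Type*) [CommRing R] (n : ℤ) :
    Chebyshev.S R (n + 2 - 1) = X * Chebyshev.S R (n + 1 - 1) - Chebyshev.S R (n - 1) := by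
  simpa only [sub_add_eq_add_sub] using Chebyshev.S_add_two R (n - 1)

lemma S_add_S_sub_one_add_two (R : Type*) [CommRing R] (n : ℤ) :
    Chebyshev.S R (n + 2) + Chebyshev.S R (n + 2 - 1) =
      X * (Chebyshev.S R (n + 1) + Chebyshev.S R (n + 1 - 1)) -
        (Chebyshev.S R n + Chebyshev.S R (n - 1)) := by
  linear_combination Chebyshev.S_add_two R n + S_sub_one_add_two R n

/-- The product of the values of a polynomial at `x`, `y` and `z`. -/
def evalProd {R : Type*} [CommRing R] (x y z : R) (p : R[X]) : R :=
  p.eval x * p.eval y * p.eval z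

lemma evalProd_neg {R : Type*} [CommRing R] (x y z : R) (p : R[X]) :
    evalProd x y z (-p) = -evalProd x y z p := by
  simp only [evalProd, eval_neg]
  ring

/-- `x, y, z` are the roots of `w³ - w² - 5w - 4`, encoded by their elementary symmetric
functions. This cubic is the cofactor of `w - 2` in `(3 - w) * (3 - (w³ - 3w)) - 1`. -/
structure AreSpectralRoots {R : Type*} [CommRing R] (x y z : R) : Prop where
  sum_eq : x + y + z = 1
  sum_mul_eq : x * y + x * z + y * z = -5
  prod_eq : x * y * z = 4

lemma exists_areSpectralRoots (K : Type*) [Field K] [IsAlgClosed K] :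
    ∃ x y z : K, AreSpectralRoots x y z := by
  let P : Cubic K := ⟨1, -1, -5, -4⟩
  have ha : P.a ≠ 0 := one_ne_zero
  obtain ⟨x, y, z, h⟩ := (Cubic.splits_iff_roots_eq_three (φ := RingHom.id K) ha).1
    (IsAlgClosed.splits _)
  have hb := Cubic.b_eq_three_roots ha h
  have hc := Cubic.c_eq_three_roots ha h
  have hd := Cubic.d_eq_three_roots ha h
  simp only [P, RingHom.id_apply, one_mul, neg_inj] at hb hc hd
  exact ⟨x, y, z, hb.symm, hc.symm, hd.symm⟩

namespace AreSpectralRoots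

variable {R : Type*} [CommRing R] {x y z : R}

lemma sub_mul_sub_mul_sub (h : AreSpectralRoots x y z) (w : R) :
    (x - w) * (y - w) * (z - w) = 4 + 5 * w + w ^ 2 - w ^ 3 := by
  linear_combination h.prod_eq - w * h.sum_mul_eq + w ^ 2 * h.sum_eq

lemma evalProd_recurrence (h : AreSpectralRoots x y z) {p : ℤ → R[X]}
    (hp : ∀ n, p (n + 2) = X * p (n + 1) - p n) {u : ℤ → R}
    (hu : ∀ n, u n = evalProd x y z (p n)) (n : ℤ) :
    u n - 4 * u (n + 1) - u (n + 2) - 24 * u (n + 3) + 65 * u (n + 4) - 24 * u (n + 5) -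
      u (n + 6) - 4 * u (n + 7) + u (n + 8) = 0 := by
  have hs : 11 = x ^ 2 + y ^ 2 + z ^ 2 := by
    linear_combination -(x + y + z + 1) * h.sum_eq + 2 * h.sum_mul_eq
  have hq : 17 = x ^ 2 * y ^ 2 + x ^ 2 * z ^ 2 + y ^ 2 * z ^ 2 := by
    linear_combination -(x * y + x * z + y * z - 5) * h.sum_mul_eq +
      2 * (x * y * z) * h.sum_eq + 2 * h.prod_eq
  have heval (w : R) (n : ℤ) : (p (n + 2)).eval w = w * (p (n + 1)).eval w - (p n).eval w := by
    rw [hp, eval_sub, eval_mul, eval_X]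
  linear_combination
    mul_mul_recurrence (heval x) (heval y) (heval z) h.prod_eq.symm hs hq hu n

lemma evalProd_S_two (h : AreSpectralRoots x y z) : evalProd x y z (Chebyshev.S R 2) = 9 := by
  simp only [evalProd, Chebyshev.S_two, eval_sub, eval_pow, eval_X, eval_one]
  grind [h.sum_eq, h.sum_mul_eq, h.prod_eq]

lemma evalProd_S_three (h : AreSpectralRoots x y z) :
    evalProd x y z (Chebyshev.S R 3) = 72 := by
  simp only [evalProd, S_three, eval_sub, eval_mul, eval_pow, eval_X, eval_one]
  grind [h.sum_eq, h.sum_mul_eq, h.prod_eq]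

lemma evalProd_S_one_add_S_zero (h : AreSpectralRoots x y z) :
    evalProd x y z (Chebyshev.S R 1 + Chebyshev.S R 0) = 1 := by
  simp only [evalProd, Chebyshev.S_one, Chebyshev.S_zero, eval_add, eval_X, eval_one]
  linear_combination h.sum_eq + h.sum_mul_eq + h.prod_eq

lemma evalProd_S_two_add_S_one (h : AreSpectralRoots x y z) :
    evalProd x y z (Chebyshev.S R 2 + Chebyshev.S R 1) = 20 := by
  simp only [evalProd, Chebyshev.S_two, Chebyshev.S_one, eval_add, eval_sub, eval_pow, eval_X,
    eval_one]
  grind [h.sum_eq, h.sum_mul_eq, h.prod_eq]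

lemma evalProd_S_three_add_S_two (h : AreSpectralRoots x y z) :
    evalProd x y z (Chebyshev.S R 3 + Chebyshev.S R 2) = 83 := by
  simp only [evalProd, S_three, Chebyshev.S_two, eval_add, eval_sub, eval_mul, eval_pow, eval_X,
    eval_one]
  grind [h.sum_eq, h.sum_mul_eq, h.prod_eq]

lemma evalProd_S_eq (h : AreSpectralRoots x y z) (i : Fin 8) :
    evalProd x y z (Chebyshev.S R ((i : ℕ) - 1)) = ![0, 1, 4, 9, 72, 320, 1332, 6889] i := by
  let u (n : ℤ) : R := evalProd x y z (Chebyshev.S R (n - 1))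
  have hrec := h.evalProd_recurrence (u := u) (S_sub_one_add_two R) fun _ => rfl
  have hneg (n : ℤ) : u (-n) = -u n := by
    rw [← evalProd_neg, ← Chebyshev.S_neg_sub_one]
  have u0 : u 0 = 0 := by simp [u, evalProd]
  have u1 : u 1 = 1 := by simp [u, evalProd]
  have u2 : u 2 = 4 := by simpa [u, evalProd] using h.prod_eq
  have u3 : u 3 = 9 := h.evalProd_S_two
  have u4 : u 4 = 72 := h.evalProd_S_three
  have u5 : u 5 = 320 := by
    have h5 := hrec (-3)
    simp only [Int.reduceNeg, Int.reduceAdd, hneg, u0, u1, u2, u3, u4] at h5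
    linear_combination h5
  have u6 : u 6 = 1332 := by
    have h6 := hrec (-2)
    simp only [Int.reduceNeg, Int.reduceAdd, hneg, u0, u1, u2, u3, u4, u5] at h6
    linear_combination h6
  have u7 : u 7 = 6889 := by
    have h7 := hrec (-1)
    simp only [Int.reduceNeg, Int.reduceAdd, hneg, u0, u1, u2, u3, u4, u5, u6] at h7
    linear_combination h7
  fin_cases i <;> assumption

lemma evalProd_S_add_S_eq (h : AreSpectralRoots x y z) (i : Fin 8) :
    evalProd x y z (Chebyshev.S R (i : ℕ) + Chebyshev.S R ((i : ℕ) - 1)) =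
      ![1, 1, 20, 83, 289, 1693, 7775, 34820] i := by
  let u (n : ℤ) : R := evalProd x y z (Chebyshev.S R n + Chebyshev.S R (n - 1))
  have hrec := h.evalProd_recurrence (u := u) (S_add_S_sub_one_add_two R) fun _ => rfl
  have hneg (n : ℤ) : u (-n - 1) = -u n := by
    simp only [u]
    rw [← evalProd_neg, Chebyshev.S_neg_sub_one, sub_sub, one_add_one_eq_two,
      Chebyshev.S_neg_sub_two, neg_add_rev]
  have u0 : u 0 = 1 := by simp [u, evalProd]
  have u1 : u 1 = 1 := h.evalProd_S_one_add_S_zero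
  have u2 : u 2 = 20 := h.evalProd_S_two_add_S_one
  have u3 : u 3 = 83 := h.evalProd_S_three_add_S_two
  have um1 : u (-1) = -1 := u0 ▸ hneg 0
  have um2 : u (-2) = -1 := u1 ▸ hneg 1
  have um3 : u (-3) = -20 := u2 ▸ hneg 2
  have u4 : u 4 = 289 := by
    have h4 := hrec (-4)
    have um4 : u (-4) = -83 := u3 ▸ hneg 3
    simp only [Int.reduceNeg, Int.reduceAdd, u0, u1, u2, u3, um1, um2, um3, um4] at h4
    linear_combination h4
  have u5 : u 5 = 1693 := by
    have h5 := hrec (-3)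
    simp only [Int.reduceNeg, Int.reduceAdd, u0, u1, u2, u3, u4, um1, um2, um3] at h5
    linear_combination h5
  have u6 : u 6 = 7775 := by
    have h6 := hrec (-2)
    simp only [Int.reduceNeg, Int.reduceAdd, u0, u1, u2, u3, u4, u5, um1, um2] at h6
    linear_combination h6
  have u7 : u 7 = 34820 := by
    have h7 := hrec (-1)
    simp only [Int.reduceNeg, Int.reduceAdd, u0, u1, u2, u3, u4, u5, u6, um1] at h7
    linear_combination h7
  fin_cases i <;> assumption

lemma intCast_eq_evalProd (h : AreSpectralRoots x y z) {p : ℤ → R[X]}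
    (hp : ∀ n, p (n + 2) = X * p (n + 1) - p n) {a : ℕ → ℤ}
    (ha : (palindromicRecurrence ℤ).IsSolution a)
    (init : ∀ i : Fin 8, (a i : R) = evalProd x y z (p (i : ℕ))) (n : ℕ) :
    (a n : R) = evalProd x y z (p n) := by
  have ha' : (palindromicRecurrence R).IsSolution fun n => (a n : R) :=
    isSolution_palindromicRecurrence_iff.2 fun n => by
      simpa using congrArg (Int.cast : ℤ → R) (isSolution_palindromicRecurrence_iff.1 ha n)
  have hp' : (palindromicRecurrence R).IsSolution fun n : ℕ => evalProd x y z (p n) :=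
    isSolution_palindromicRecurrence_iff.2 fun n => by
      simpa using h.evalProd_recurrence hp (fun _ => rfl) n
  exact congrFun (eq_of_isSolution_palindromicRecurrence ha' hp' init) n

end AreSpectralRoots

end Recurrence

section GenPetersenThree

variable {x y z : ℂ}

lemma cycleEigenvalue_three_mul {N : ℕ} [NeZero N] (j : ZMod N) :
    cycleEigenvalue (3 * j) = cycleEigenvalue j ^ 3 - 3 * cycleEigenvalue j := by
  have hneg : -(3 * j) = 3 • -j := by rw [nsmul_eq_mul, Nat.cast_ofNat, mul_neg]
  have hpos : 3 * j = 3 • j := by rw [nsmul_eq_mul, Nat.cast_ofNat]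
  have hinv : (ZMod.stdAddChar j * ZMod.stdAddChar (-j) : ℂ) = 1 := by
    rw [← AddChar.map_add_eq_mul, add_neg_cancel, AddChar.map_zero_eq_one]
  rw [cycleEigenvalue, cycleEigenvalue, hneg, hpos, AddChar.map_nsmul_eq_pow,
    AddChar.map_nsmul_eq_pow]
  linear_combination (-3 * (ZMod.stdAddChar j + ZMod.stdAddChar (-j)) : ℂ) * hinv

theorem numSpanningTrees_genPetersen_three (h : AreSpectralRoots x y z) {N : ℕ} [NeZero N]
    (hN : 6 < N) :
    (numSpanningTrees (genPetersen N 3) : ℂ) =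
      N * ((∏ j ∈ Finset.univ.erase (0 : ZMod N), (x - cycleEigenvalue j)) *
        (∏ j ∈ Finset.univ.erase (0 : ZMod N), (y - cycleEigenvalue j)) *
        ∏ j ∈ Finset.univ.erase (0 : ZMod N), (z - cycleEigenvalue j)) := by
  have factor (j : ZMod N) :
      (3 - cycleEigenvalue j) * (3 - cycleEigenvalue (((3 : ℕ) : ZMod N) * j)) - 1 =
        (2 - cycleEigenvalue j) * ((x - cycleEigenvalue j) * (y - cycleEigenvalue j) *
          (z - cycleEigenvalue j)) := by
    rw [Nat.cast_ofNat, cycleEigenvalue_three_mul, h.sub_mul_sub_mul_sub]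
    ring
  refine mul_left_cancel₀ (NeZero.ne (N : ℂ)) ?_
  rw [card_mul_numSpanningTrees_genPetersen three_pos hN, Finset.prod_congr rfl fun j _ => factor j,
    Finset.prod_mul_distrib, Finset.prod_mul_distrib, Finset.prod_mul_distrib,
    prod_two_sub_cycleEigenvalue]
  ring

theorem numSpanningTrees_genPetersen_two_mul_three (h : AreSpectralRoots x y z) {n : ℕ}
    (hn : 4 ≤ n) :
    (numSpanningTrees (genPetersen (2 * n) 3) : ℂ) =
      12 * n * evalProd x y z (Chebyshev.S ℂ (n - 1)) ^ 2 := by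
  have : NeZero (2 * n) := ⟨by lia⟩
  have hprod : (x + 2) * (y + 2) * (z + 2) = 6 := by
    linear_combination h.sub_mul_sub_mul_sub (-2)
  rw [numSpanningTrees_genPetersen_three h (by lia)]
  simp only [prod_sub_cycleEigenvalue_two_mul, evalProd]
  push_cast
  linear_combination 2 * n * ((Chebyshev.S ℂ (n - 1)).eval x * (Chebyshev.S ℂ (n - 1)).eval y *
    (Chebyshev.S ℂ (n - 1)).eval z) ^ 2 * hprod

theorem numSpanningTrees_genPetersen_two_mul_add_one_three (h : AreSpectralRoots x y z) {n : ℕ}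
    (hn : 3 ≤ n) :
    (numSpanningTrees (genPetersen (2 * n + 1) 3) : ℂ) =
      (2 * n + 1) * evalProd x y z (Chebyshev.S ℂ n + Chebyshev.S ℂ (n - 1)) ^ 2 := by
  rw [numSpanningTrees_genPetersen_three h (by lia)]
  simp only [prod_sub_cycleEigenvalue_two_mul_add_one, evalProd]
  push_cast
  ring

end GenPetersenThree

/-- With `a, b : ℕ → ℤ` both satisfying the recurrence
`u(n) − 4u(n+1) − u(n+2) − 24u(n+3) + 65u(n+4) − 24u(n+5) − u(n+6) − 4u(n+7) + u(n+8) = 0`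
and the given initial data, `τ(GP(2n,3)) = 12n·a(n)²` for `n ≥ 4` and
`τ(GP(2n+1,3)) = (2n+1)·b(n)²` for `n ≥ 3`. -/
theorem spanning_trees_GP3_recurrence (a b : ℕ → ℤ)
    (hreca : ∀ n : ℕ, a n - 4 * a (n + 1) - a (n + 2) - 24 * a (n + 3) + 65 * a (n + 4)
      - 24 * a (n + 5) - a (n + 6) - 4 * a (n + 7) + a (n + 8) = 0)
    (hrecb : ∀ n : ℕ, b n - 4 * b (n + 1) - b (n + 2) - 24 * b (n + 3) + 65 * b (n + 4)
      - 24 * b (n + 5) - b (n + 6) - 4 * b (n + 7) + b (n + 8) = 0)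
    (ha0 : a 0 = 0) (ha1 : a 1 = 1) (ha2 : a 2 = 4) (ha3 : a 3 = 9) (ha4 : a 4 = 72)
    (ha5 : a 5 = 320) (ha6 : a 6 = 1332) (ha7 : a 7 = 6889)
    (hb0 : b 0 = 1) (hb1 : b 1 = 1) (hb2 : b 2 = 20) (hb3 : b 3 = 83) (hb4 : b 4 = 289)
    (hb5 : b 5 = 1693) (hb6 : b 6 = 7775) (hb7 : b 7 = 34820) :
    (∀ n : ℕ, 4 ≤ n →
      (numSpanningTrees (genPetersen (2 * n) 3) : ℤ) = 12 * n * a n ^ 2) ∧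
    (∀ n : ℕ, 3 ≤ n →
      (numSpanningTrees (genPetersen (2 * n + 1) 3) : ℤ) = (2 * n + 1) * b n ^ 2) := by
  obtain ⟨x, y, z, h⟩ := exists_areSpectralRoots ℂ
  have a_eq (n : ℕ) : (a n : ℂ) = evalProd x y z (Chebyshev.S ℂ (n - 1)) := by
    refine h.intCast_eq_evalProd (p := fun n => Chebyshev.S ℂ (n - 1)) (S_sub_one_add_two ℂ)
      (isSolution_palindromicRecurrence_iff.2 hreca) (fun i => ?_) n
    rw [h.evalProd_S_eq]
    fin_cases i <;> simp [*]
  have b_eq (n : ℕ) : (b n : ℂ) = evalProd x y z (Chebyshev.S ℂ n + Chebyshev.S ℂ (n - 1)) := by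
    refine h.intCast_eq_evalProd (p := fun n => Chebyshev.S ℂ n + Chebyshev.S ℂ (n - 1))
      (S_add_S_sub_one_add_two ℂ) (isSolution_palindromicRecurrence_iff.2 hrecb) (fun i => ?_) n
    rw [h.evalProd_S_add_S_eq]
    fin_cases i <;> simp [*]
  refine ⟨fun n hn => ?_, fun n hn => ?_⟩
  · have htau := numSpanningTrees_genPetersen_two_mul_three h hn
    rw [← a_eq] at htau
    exact_mod_cast htau
  · have htau := numSpanningTrees_genPetersen_two_mul_add_one_three h hn
    rw [← b_eq] at htau
    exact_mod_cast htau
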